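/- Let J be a finite index set and for each j ∈ J let A_j = A_j⁺ + A_j⁻ be complex n×n matrices with A_j⁺ Hermitian positive semidefinite and A_j⁻ Hermitian negative semidefinite, and let c_j ∈ ℝ. Fix z ∈ ℂⁿ. Suppose v ∈ ℂⁿ and s ≥ 0 satisfy g_j(v; z) ≤ c_j + s for all j ∈ J. Then the optimal slack of the FPP subproblem linearized at v is at most s: the infimum of { t : t ≥ 0 and there exists w ∈ ℂⁿ with g_j(w; v) ≤ c_j + t for all j ∈ J } is at most s. -/

import Mathlib

open Matrix
open scoped ComplexOrder

/-- A complex matrix is negative semidefinite if its negation is positive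
semidefinite. -/
def Matrix.NegSemidef' {n : ℕ} (A : Matrix (Fin n) (Fin n) ℂ) : Prop :=
  (-A).PosSemidef

/-- The FPP-SCA surrogate `g(v; z)` of the quadratic `Re(vᴴ A v)` for the
decomposition `A = A⁺ + A⁻`. -/
noncomputable def surrogate {n : ℕ} (Ap An : Matrix (Fin n) (Fin n) ℂ)
    (z v : Fin n → ℂ) : ℝ :=
  (star v ⬝ᵥ (Ap *ᵥ v)).re + 2 * (star z ⬝ᵥ (An *ᵥ v)).re - (star z ⬝ᵥ (An *ᵥ z)).re

/-! The concave part `Re(vᴴ A⁻ v)` lies below each of its linearizations, with the gap at `v` of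
the linearization at `z` equal to `-(v - z)ᴴ A⁻ (v - z)`. Hence `g(·; z)` majorizes the quadratic
`Re(vᴴ A v)`, while `g(·; v)` touches it at `v`, and so `g(v; v) ≤ g(v; z)`: a point feasible for
one subproblem stays feasible, with the same slack, for the subproblem linearized at it. -/

section HermitianForm

theorem star_star_dotProduct_mulVec {ι κ R : Type*} [Fintype ι] [Fintype κ] [NonUnitalSemiring R]
    [StarRing R] (B : Matrix ι κ R) (x : ι → R) (y : κ → R) :
    star (star x ⬝ᵥ (B *ᵥ y)) = star y ⬝ᵥ (Bᴴ *ᵥ x) := by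
  rw [← star_dotProduct_star, star_star, star_mulVec, dotProduct_mulVec]

variable {ι 𝕜 : Type*} [Fintype ι] [RCLike 𝕜] {B : Matrix ι ι 𝕜}

theorem re_star_dotProduct_mulVec_comm (hB : B.IsHermitian) (x y : ι → 𝕜) :
    RCLike.re (star x ⬝ᵥ (B *ᵥ y)) = RCLike.re (star y ⬝ᵥ (B *ᵥ x)) := by
  have hstar := star_star_dotProduct_mulVec B x y
  rw [hB.eq] at hstar
  rw [← hstar, RCLike.star_def, RCLike.conj_re]

theorem re_star_sub_dotProduct_mulVec_sub (hB : B.IsHermitian) (x y : ι → 𝕜) :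
    RCLike.re (star (x - y) ⬝ᵥ (B *ᵥ (x - y))) =
      RCLike.re (star x ⬝ᵥ (B *ᵥ x)) - 2 * RCLike.re (star y ⬝ᵥ (B *ᵥ x)) +
        RCLike.re (star y ⬝ᵥ (B *ᵥ y)) := by
  simp only [star_sub, mulVec_sub, sub_dotProduct, dotProduct_sub, map_sub,
    re_star_dotProduct_mulVec_comm hB x y]
  ring

theorem re_star_dotProduct_mulVec_le_linearization (hB : (-B).PosSemidef) (x y : ι → 𝕜) :
    RCLike.re (star x ⬝ᵥ (B *ᵥ x)) ≤
      2 * RCLike.re (star y ⬝ᵥ (B *ᵥ x)) - RCLike.re (star y ⬝ᵥ (B *ᵥ y)) := by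
  have hgap := hB.re_dotProduct_nonneg (x - y)
  rw [re_star_sub_dotProduct_mulVec_sub hB.isHermitian] at hgap
  simp only [neg_mulVec, dotProduct_neg, map_neg] at hgap
  linarith

end HermitianForm

section Surrogate

variable {n : ℕ}

theorem surrogate_self (Ap An : Matrix (Fin n) (Fin n) ℂ) (v : Fin n → ℂ) :
    surrogate Ap An v v = (star v ⬝ᵥ ((Ap + An) *ᵥ v)).re := by
  rw [surrogate, add_mulVec, dotProduct_add, Complex.add_re]
  ring

theorem re_star_dotProduct_mulVec_le_surrogate (Ap : Matrix (Fin n) (Fin n) ℂ)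
    {An : Matrix (Fin n) (Fin n) ℂ} (hAn : An.NegSemidef') (z v : Fin n → ℂ) :
    (star v ⬝ᵥ ((Ap + An) *ᵥ v)).re ≤ surrogate Ap An z v := by
  have hconcave : (star v ⬝ᵥ (An *ᵥ v)).re ≤
      2 * (star z ⬝ᵥ (An *ᵥ v)).re - (star z ⬝ᵥ (An *ᵥ z)).re :=
    re_star_dotProduct_mulVec_le_linearization hAn v z
  rw [surrogate, add_mulVec, dotProduct_add, Complex.add_re]
  linarith

theorem surrogate_self_le (Ap : Matrix (Fin n) (Fin n) ℂ) {An : Matrix (Fin n) (Fin n) ℂ}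
    (hAn : An.NegSemidef') (z v : Fin n → ℂ) :
    surrogate Ap An v v ≤ surrogate Ap An z v :=
  (surrogate_self Ap An v).trans_le (re_star_dotProduct_mulVec_le_surrogate Ap hAn z v)

end Surrogate

theorem stmt15_general {n : ℕ} {J : Type*} (Ap An : J → Matrix (Fin n) (Fin n) ℂ) (c : J → ℝ)
    (hAn : ∀ j, (An j).NegSemidef') (z v : Fin n → ℂ) (s : ℝ) (hs : 0 ≤ s)
    (hfeas : ∀ j, surrogate (Ap j) (An j) z v ≤ c j + s) :
    sInf {t : ℝ | 0 ≤ t ∧ ∃ w : Fin n → ℂ,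
      ∀ j, surrogate (Ap j) (An j) v w ≤ c j + t} ≤ s := by
  have hfeas_next : ∀ j, surrogate (Ap j) (An j) v v ≤ c j + s := fun j =>
    (surrogate_self_le (Ap j) (hAn j) z v).trans (hfeas j)
  exact csInf_le ⟨0, fun _ ht => ht.1⟩ ⟨hs, v, hfeas_next⟩

/-- If `v` and `s ≥ 0` satisfy the slack-relaxed surrogate
constraints at `z`, i.e. `g_j(v; z) ≤ c_j + s` for all `j`, then the optimal
slack of the FPP subproblem linearized at `v` is at most `s`:
`inf { t : t ≥ 0 ∧ ∃ w, ∀ j, g_j(w; v) ≤ c_j + t } ≤ s`. -/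
theorem stmt15 (n : ℕ) (J : Type*) [Fintype J]
    (A Ap An : J → Matrix (Fin n) (Fin n) ℂ) (c : J → ℝ)
    (hsum : ∀ j, A j = Ap j + An j)
    (hAp : ∀ j, (Ap j).PosSemidef) (hAn : ∀ j, (An j).NegSemidef')
    (z v : Fin n → ℂ) (s : ℝ) (hs : 0 ≤ s)
    (hfeas : ∀ j, surrogate (Ap j) (An j) z v ≤ c j + s) :
    sInf {t : ℝ | 0 ≤ t ∧ ∃ w : Fin n → ℂ,
      ∀ j, surrogate (Ap j) (An j) v w ≤ c j + t} ≤ s :=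
  stmt15_general Ap An c hAn z v s hs hfeas
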